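/- Let M be a d-dimensional Hausdorff topological manifold and let c(M) denote the cardinality of the set of connected components of M. Then there exist an index set I with |I| ≤ max(c(M), 2^ℵ₀) and a topological embedding of M into the product space ℝ^I. -/

import Mathlib

universe u v

open Topology Filter Cardinal Set

/-!
In a first-countable Hausdorff space a set is clopen as soon as it contains a neighbourhood of each
of its points and the limits of its convergent sequences. If every point has a neighbourhood of
cardinality at most `κ`, this is closure under `κ` many operations of countable arity, so when
`κ ^ ℵ₀ ≤ κ` each point lies in a clopen set of cardinality at most `κ`. Hence every connected
component has at most `κ` points (`κ = 𝔠` for a manifold), which bounds the number of points of the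
space, and countably many real functions per point suffice for a Tychonoff embedding.
-/

section ClosureUnderOperations

/-- The arities of a signature with constants `A` and operations `B`, each of arity `ι`. The
elements of `WType (termArity A B ι)` are the closed terms over this signature. -/
def termArity (A B : Type u) (ι : Type v) : A ⊕ B → Type v :=
  Sum.elim (fun _ ↦ PEmpty) (fun _ ↦ ι)

theorem mk_wType_termArity_le {A B : Type u} {ι : Type v} {κ : Cardinal.{u}} (hκ : ℵ₀ ≤ κ)
    (hι : lift.{v} κ ^ lift.{u} #ι ≤ lift.{v} κ) (hA : #A ≤ κ) (hB : #B ≤ κ) :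
    #(WType (termArity A B ι)) ≤ lift.{v} κ := by
  have hκ' : ℵ₀ ≤ lift.{v} κ := aleph0_le_lift.2 hκ
  have hsymbols : lift.{v} #(A ⊕ B) ≤ lift.{v} κ :=
    lift_le.2 (by simpa using add_le_of_le hκ hA hB)
  have hargs (a : A ⊕ B) : lift.{v} κ ^ lift.{u} #(termArity A B ι a) ≤ lift.{v} κ := by
    cases a with
    | inl _ => simpa [termArity] using one_le_aleph0.trans hκ
    | inr _ => exact hι
  refine WType.cardinalMk_le_of_le' ?_
  calc (Cardinal.sum fun a ↦ lift.{v} κ ^ lift.{u} #(termArity A B ι a))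
      ≤ Cardinal.sum fun _ : A ⊕ B ↦ lift.{v} κ := Cardinal.sum_le_sum _ _ hargs
    _ = lift.{v} #(A ⊕ B) * lift.{v} κ := by
        rw [sum_const, lift_umax.{u, v}, lift_id'.{u, v}]
    _ ≤ lift.{v} κ := mul_le_of_le hκ' hsymbols le_rfl

theorem exists_subset_range_of_mk_le {α β : Type u} [Nonempty α] {s : Set α} (hs : #s ≤ #β) :
    ∃ g : β → α, s ⊆ range g := by
  obtain ⟨e⟩ := hs
  exact ⟨Function.extend e Subtype.val fun _ ↦ Classical.arbitrary α,
    fun y hy ↦ ⟨e ⟨y, hy⟩, e.injective.extend_apply _ _ _⟩⟩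

theorem exists_superset_mk_le_forall_subset {α : Type u} {ι : Type v} {κ : Cardinal.{u}}
    (hκ : ℵ₀ ≤ κ) (hι : lift.{v} κ ^ lift.{u} #ι ≤ lift.{v} κ) {F : (ι → α) → Set α}
    (hF : ∀ f, #(F f) ≤ κ) {s : Set α} (hs : #s ≤ κ) :
    ∃ t, s ⊆ t ∧ #t ≤ κ ∧ ∀ f : ι → α, (∀ i, f i ∈ t) → F f ⊆ t := by
  cases isEmpty_or_nonempty α with
  | inl _ => exact ⟨s, subset_rfl, hs, fun _ _ y ↦ isEmptyElim y⟩
  | inr _ =>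
    choose g hg using fun f ↦ exists_subset_range_of_mk_le ((hF f).trans_eq κ.mk_out.symm)
    let eval : WType (termArity s κ.out ι) → α := WType.elim α fun
      | ⟨.inl a, _⟩ => a
      | ⟨.inr b, f⟩ => g f b
    refine ⟨range eval, fun a ha ↦ ⟨.mk (.inl ⟨a, ha⟩) PEmpty.elim, rfl⟩, ?_, fun f hf y hy ↦ ?_⟩
    · have hterms := mk_wType_termArity_le hκ hι hs κ.mk_out.le
      have hrange := (mk_range_le_lift (f := eval)).trans (lift_le.2 hterms)
      simpa using hrange
    · choose t ht using hf
      obtain rfl : (fun i ↦ eval (t i)) = f := funext ht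
      obtain ⟨b, rfl⟩ := hg _ hy
      exact ⟨.mk (.inr b) t, rfl⟩

end ClosureUnderOperations

section LocallySmall

variable {X : Type u} [TopologicalSpace X] [SequentialSpace X] [T2Space X] {κ : Cardinal.{u}}

theorem exists_isClopen_superset_mk_le (hκ : ℵ₀ ≤ κ) (hκω : κ ^ ℵ₀ ≤ κ)
    (hX : ∀ x : X, ∃ U ∈ 𝓝 x, #U ≤ κ) {s : Set X} (hs : #s ≤ κ) :
    ∃ t, s ⊆ t ∧ IsClopen t ∧ #t ≤ κ := by
  choose U hU hUκ using hX
  have hlim (f : ℕ → X) : #{y | Tendsto f atTop (𝓝 y)} ≤ κ :=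
    (mk_le_one_iff_set_subsingleton.2 fun _ hy _ hz ↦ tendsto_nhds_unique hy hz).trans
      (one_le_aleph0.trans hκ)
  obtain ⟨t, hst, htκ, ht⟩ := exists_superset_mk_le_forall_subset (ι := ℕ) hκ (by simpa using hκω)
    (F := fun f ↦ U (f 0) ∪ {y | Tendsto f atTop (𝓝 y)})
    (fun f ↦ (mk_union_le _ _).trans (add_le_of_le hκ (hUκ _) (hlim f))) hs
  refine ⟨t, hst, ⟨?_, ?_⟩, htκ⟩
  · exact IsSeqClosed.isClosed fun f y hf hy ↦ ht f hf (.inr hy)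
  · exact isOpen_iff_mem_nhds.2 fun x hx ↦
      mem_of_superset (hU x) (subset_union_left.trans (ht (fun _ ↦ x) fun _ ↦ hx))

theorem mk_connectedComponent_le (hκ : ℵ₀ ≤ κ) (hκω : κ ^ ℵ₀ ≤ κ)
    (hX : ∀ x : X, ∃ U ∈ 𝓝 x, #U ≤ κ) (x : X) : #(connectedComponent x) ≤ κ := by
  have hx : #({x} : Set X) ≤ κ := by simpa using one_le_aleph0.trans hκ
  obtain ⟨t, hxt, ht, htκ⟩ := exists_isClopen_superset_mk_le hκ hκω hX hx
  exact (mk_le_mk_of_subset (ht.connectedComponent_subset (hxt rfl))).trans htκ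

theorem mk_le_max_mk_connectedComponents (hκ : ℵ₀ ≤ κ) (hκω : κ ^ ℵ₀ ≤ κ)
    (hX : ∀ x : X, ∃ U ∈ 𝓝 x, #U ≤ κ) : #X ≤ max #(ConnectedComponents X) κ := by
  have hfiber (c : ConnectedComponents X) :
      #((ConnectedComponents.mk : X → ConnectedComponents X) ⁻¹' {c}) ≤ κ := by
    obtain ⟨x, rfl⟩ := ConnectedComponents.surjective_coe c
    rw [connectedComponents_preimage_singleton]
    exact mk_connectedComponent_le hκ hκω hX x
  exact (mk_le_mk_mul_of_mk_preimage_le _ hfiber).trans (mul_le_max_of_aleph0_le_right hκ)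

end LocallySmall

section Embedding

variable {X : Type u} [TopologicalSpace X]

theorem isInducing_pi_of_forall_mem_nhds {ι : Type*} {Y : ι → Type*} [∀ i, TopologicalSpace (Y i)]
    {f : ∀ i, X → Y i} (hf : ∀ i, Continuous (f i))
    (hsep : ∀ x, ∀ U ∈ 𝓝 x, ∃ i, ∃ V ∈ 𝓝 (f i x), f i ⁻¹' V ⊆ U) :
    IsInducing fun x i ↦ f i x := by
  refine isInducing_iff_nhds.2 fun x ↦ le_antisymm ?_ fun U hU ↦ ?_
  · exact (continuous_pi hf).continuousAt.le_comap
  · obtain ⟨i, V, hV, hVU⟩ := hsep x U hU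
    exact ⟨Function.eval i ⁻¹' V, (continuous_apply i).continuousAt hV, hVU⟩

theorem exists_isEmbedding_pi_real_of_hasBasis [T35Space X] {ι : Type v} {s : X → ι → Set X}
    (hs : ∀ x, (𝓝 x).HasBasis (fun _ ↦ True) (s x)) :
    ∃ φ : X → X × ι → ℝ, IsEmbedding φ := by
  have hbump (p : X × ι) : ∃ f : X → unitInterval,
      Continuous f ∧ f p.1 = 0 ∧ EqOn f 1 (interior (s p.1 p.2))ᶜ :=
    CompletelyRegularSpace.completely_regular_isOpen _ _ isOpen_interior
      (mem_interior_iff_mem_nhds.2 ((hs p.1).mem_of_mem trivial))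
  choose f hf hf₀ hf₁ using hbump
  refine ⟨fun x p ↦ f p x, (isInducing_pi_of_forall_mem_nhds
    (fun p ↦ continuous_subtype_val.comp (hf p)) fun x U hU ↦ ?_).isEmbedding⟩
  obtain ⟨i, -, hi⟩ := (hs x).mem_iff.1 hU
  refine ⟨(x, i), Iio 1, Iio_mem_nhds (by simp [hf₀ (x, i)]), fun y hy ↦ ?_⟩
  by_contra hyU
  have hy₁ : f (x, i) y = 1 := hf₁ (x, i) fun hyi ↦ hyU (hi (interior_subset hyi))
  simp [hy₁] at hy

theorem exists_isEmbedding_pi_real [T35Space X] [FirstCountableTopology X] :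
    ∃ φ : X → X × ℕ → ℝ, IsEmbedding φ := by
  choose s hs using fun x : X ↦ (𝓝 x).exists_antitone_basis
  exact exists_isEmbedding_pi_real_of_hasBasis fun x ↦ (hs x).toHasBasis

theorem manifold_embeds_into_pi_real_general [T35Space X] [FirstCountableTopology X]
    {κ : Cardinal.{u}} (hκ : ℵ₀ ≤ κ) (hκω : κ ^ ℵ₀ ≤ κ) (hX : ∀ x : X, ∃ U ∈ 𝓝 x, #U ≤ κ) :
    ∃ (I : Type u) (φ : X → I → ℝ), #I ≤ max #(ConnectedComponents X) κ ∧ IsEmbedding φ := by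
  obtain ⟨φ, hφ⟩ := exists_isEmbedding_pi_real (X := X)
  have hmax : ℵ₀ ≤ max #(ConnectedComponents X) κ := hκ.trans (le_max_right _ _)
  refine ⟨X × ℕ, φ, ?_, hφ⟩
  simpa using mul_le_of_le hmax (mk_le_max_mk_connectedComponents hκ hκω hX) hmax

end Embedding

section ChartedSpace

variable {H : Type v} [TopologicalSpace H] {M : Type u} [TopologicalSpace M]

theorem nonempty_chartedSpace (hM : ∀ x : M, ∃ U : Set M, IsOpen U ∧ x ∈ U ∧
    ∃ V : Set H, IsOpen V ∧ Nonempty (U ≃ₜ V)) : Nonempty (ChartedSpace H M) := by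
  have hchart (x : M) : ∃ e : OpenPartialHomeomorph M H, x ∈ e.source := by
    obtain ⟨U, hU, hx, V, hV, ⟨e⟩⟩ := hM x
    let U' : TopologicalSpace.Opens M := ⟨U, hU⟩
    let V' : TopologicalSpace.Opens H := ⟨V, hV⟩
    exact ⟨(U'.openPartialHomeomorphSubtypeCoe ⟨x, hx⟩).symm.trans
      (e.toOpenPartialHomeomorph.trans (V'.openPartialHomeomorphSubtypeCoe ⟨e ⟨x, hx⟩⟩)),
      by simpa [U', V'] using hx⟩
  choose e he using hchart
  exact ⟨{ atlas := range e
           chartAt := e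
           mem_chart_source := he
           chart_mem_atlas := mem_range_self }⟩

variable (H) in
theorem firstCountableTopology_of_chartedSpace [ChartedSpace H M] [FirstCountableTopology H] :
    FirstCountableTopology M where
  nhds_generated_countable x := by
    rw [← (chartAt H x).symm_map_nhds_eq (mem_chart_source H x)]
    infer_instance

theorem t35Space_of_weaklyLocallyCompactSpace [T2Space M] [WeaklyLocallyCompactSpace M] :
    T35Space M :=
  OnePoint.isOpenEmbedding_coe.isEmbedding.t35Space

theorem exists_mem_nhds_mk_le_of_chartedSpace [ChartedSpace H M] {κ : Cardinal.{u}}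
    (hH : lift.{u} #H ≤ lift.{v} κ) (x : M) : ∃ U ∈ 𝓝 x, #U ≤ κ :=
  ⟨(chartAt H x).source, chart_source_mem_nhds H x, lift_le.1 <|
    (lift_mk_le_lift_mk_of_injective (chartAt H x).injOn.injective).trans hH⟩

theorem exists_isEmbedding_pi_real_of_chartedSpace [ChartedSpace H M] [T2Space M]
    [LocallyCompactSpace H] [FirstCountableTopology H] {κ : Cardinal.{u}} (hκ : ℵ₀ ≤ κ)
    (hκω : κ ^ ℵ₀ ≤ κ) (hH : lift.{u} #H ≤ lift.{v} κ) :
    ∃ (I : Type u) (φ : M → I → ℝ), #I ≤ max #(ConnectedComponents M) κ ∧ IsEmbedding φ := by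
  have : FirstCountableTopology M := firstCountableTopology_of_chartedSpace H
  have : LocallyCompactSpace M := ChartedSpace.locallyCompactSpace H M
  have : T35Space M := t35Space_of_weaklyLocallyCompactSpace
  exact manifold_embeds_into_pi_real_general hκ hκω (exists_mem_nhds_mk_le_of_chartedSpace hH)

end ChartedSpace

theorem mk_fin_arrow_real_le_continuum (d : ℕ) : #(Fin d → ℝ) ≤ 𝔠 := by
  simpa [mk_real] using power_nat_le (n := d) aleph0_le_continuum

/-- Every `d`-dimensional Hausdorff topological manifold `M` admits a topological
embedding into a product space `ℝ^I` with `|I| ≤ max (c M) (2 ^ ℵ₀)`, where `c M`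
is the number of connected components of `M`. -/
theorem manifold_embeds_into_pi_real {d : ℕ} (M : Type u) [TopologicalSpace M]
    [T2Space M]
    (hM : ∀ x : M, ∃ U : Set M, IsOpen U ∧ x ∈ U ∧
      ∃ V : Set (Fin d → ℝ), IsOpen V ∧ Nonempty (U ≃ₜ V)) :
    ∃ (I : Type u) (φ : M → I → ℝ),
      Cardinal.mk I ≤ max (Cardinal.mk (ConnectedComponents M)) Cardinal.continuum ∧
      Topology.IsEmbedding φ := by
  obtain ⟨_⟩ := nonempty_chartedSpace hM
  exact exists_isEmbedding_pi_real_of_chartedSpace (H := Fin d → ℝ) aleph0_le_continuum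
    continuum_power_aleph0.le (by simpa using mk_fin_arrow_real_le_continuum d)
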